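/- Let 2 ≤ l ≤ n−1, let u = x_1 x_{l+1}^{a_{l+1}}⋯x_n^{a_n} and v = x_l x_n^{d−1} be monomials of degree d with u ≥_lex v (so that I = (L(u,v)) is a lexsegment ideal with linear resolution which is not a completely lexsegment ideal). Then L(u,v) satisfies the σ-exchange property, where <_σ is the decreasing revlexicographic order on S, with respect to every monomial order < on R = K[{T_w}_{w ∈ L(u,v)}]. -/

import Mathlib

/-! Write "low" for the indices `i < l` (the variables `x_1, …, x_l`). A monomial of degree `d` lies
in `L(u,v)` iff it is either `x_1 w'` with `w'` free of `x_1, …, x_l` and `x_1 w' ≤_lex u`, or it is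
free of `x_1` and divisible by one of `x_2, …, x_l` (`mem_LSeg_left`, `mem_LSeg_right`,
`mem_LSeg_cases`). In particular every element has low degree at least `1`.

Let `U = u_1⋯u_N <_σ V = v_1⋯v_N`. All factors have degree `d`, so there is an index `s` with
`U_s < V_s` and `U_t = V_t` for `t > s`; take `q = s`. Comparing total degrees,
`∑_{i<s} U_i > ∑_{i<s} V_i`.

* If `s` is low, some factor `u_δ` has a variable `x_j` with `j < s`, and `x_s u_δ / x_j` is free
  of `x_1` and divisible by `x_s`, hence in `L(u,v)`.
* If `s` is not low, then `∑_{i<s} V_i ≥ N`, so some factor `u_δ` has degree at least `2` in the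
  variables before `x_s`. Either it contains `x_j` with `j` not low and `j < s`, and replacing it
  by `x_s` keeps the low part and makes the monomial lex smaller; or its low degree is at least
  `2`, so it is free of `x_1` and stays divisible by a low variable after losing one of them.

The exchange works for arbitrary monomials, standard or not, so the order on `R` is immaterial. -/

/-- Monomials of `K[x_1,…,x_n]`, encoded by their exponent vectors (`x_1` ↔ index `0`). -/
abbrev Mon (n : ℕ) := Fin n →₀ ℕ

/-- Total degree of a monomial. -/
def mdeg {n : ℕ} (m : Mon n) : ℕ := ∑ i, m i

/-- `m <_lex m'` (so `m' >_lex m`) with `x_1 > x_2 > ⋯ > x_n`: at the first index where the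
exponent vectors differ, `m'` has the larger exponent. -/
def LexLT {n : ℕ} (m m' : Mon n) : Prop :=
  ∃ i : Fin n, (∀ j, j < i → m j = m' j) ∧ m i < m' i

/-- `m ≤_lex m'`. -/
def LexLE {n : ℕ} (m m' : Mon n) : Prop := m = m' ∨ LexLT m m'

/-- `m >_revlex m'` for monomials of equal degree: at the last index where the exponent
vectors differ, `m` has the smaller exponent. -/
def RevLexGT {n : ℕ} (m m' : Mon n) : Prop :=
  ∃ s : Fin n, (∀ t, s < t → m t = m' t) ∧ m s < m' s

/-- The decreasing revlexicographic order on monomials: `m <_σ m'` iff `deg m < deg m'`, or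
the degrees agree and `m >_revlex m'`. -/
def DecRevLexLT {n : ℕ} (m m' : Mon n) : Prop :=
  mdeg m < mdeg m' ∨ (mdeg m = mdeg m' ∧ RevLexGT m m')

/-- The lexsegment set `L(u,v) = {w ∈ M_d : u ≥_lex w ≥_lex v}`. -/
def LSeg {n : ℕ} (u v : Mon n) (d : ℕ) : Set (Mon n) :=
  {w | mdeg w = d ∧ LexLE w u ∧ LexLE v w}

/-- `A` is a lexsegment set inside `M_e`. -/
def IsLexSegmentSet {n : ℕ} (A : Set (Mon n)) (e : ℕ) : Prop :=
  ∃ u v : Mon n, mdeg u = e ∧ mdeg v = e ∧ LexLE v u ∧ A = LSeg u v e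

/-- `(L(u,v))` is a completely lexsegment ideal: for every `k ≥ 0` the `k`-th shadow
`{m·w : m ∈ M_k, w ∈ L(u,v)}` is a lexsegment set in `M_{d+k}`. -/
def IsCompletelyLex {n : ℕ} (u v : Mon n) (d : ℕ) : Prop :=
  ∀ k : ℕ,
    IsLexSegmentSet {w | ∃ m w₀, mdeg m = k ∧ w₀ ∈ LSeg u v d ∧ w = m + w₀} (d + k)

/-- The set of products of `N` monomials from `B`; for `B` a set of monomials of a fixed
degree `d` this is the minimal monomial generating set of `I^N`, `I = (B)`. -/
def prodSet {n : ℕ} (B : Set (Mon n)) (N : ℕ) : Set (Mon n) :=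
  {m | ∃ f : Fin N → Mon n, (∀ i, f i ∈ B) ∧ m = ∑ i, f i}

/-- The equigenerated monomial ideal with (minimal) monomial generating set `G` has linear
quotients with respect to the order given by `prec` (`prec a b` = "`a` is listed before
`b`"): for generators `u_j` before `u_i` there are a generator `u_k` before `u_i` and a
variable `x_q` with `u_k / gcd(u_k,u_i) = x_q` and `x_q ∣ u_j / gcd(u_j,u_i)`. -/
def LinQuotOrder {n : ℕ} (G : Set (Mon n)) (prec : Mon n → Mon n → Prop) : Prop :=
  ∀ uj ∈ G, ∀ ui ∈ G, prec uj ui →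
    ∃ uk ∈ G, prec uk ui ∧ ∃ q : Fin n,
      (∀ p : Fin n, p ≠ q → uk p ≤ ui p) ∧ uk q = ui q + 1 ∧ ui q < uj q

/-- The equigenerated monomial ideal with minimal monomial generating set `G` has linear
quotients (with respect to some linear order of the generators). -/
def HasLinQuot {n : ℕ} (G : Set (Mon n)) : Prop :=
  ∃ prec : Mon n → Mon n → Prop,
    (∀ a ∈ G, ¬ prec a a) ∧
    (∀ a ∈ G, ∀ b ∈ G, ∀ c ∈ G, prec a b → prec b c → prec a c) ∧
    (∀ a ∈ G, ∀ b ∈ G, a ≠ b → prec a b ∨ prec b a) ∧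
    LinQuotOrder G prec
/-- A monomial order on a polynomial ring with variables indexed by `α`, given as a strict
total order on exponent vectors which is compatible with multiplication of monomials and
for which `1` is the smallest monomial. -/
structure MonOrd (α : Type*) where
  lt : (α →₀ ℕ) → (α →₀ ℕ) → Prop
  irrefl : ∀ a, ¬ lt a a
  trans : ∀ a b c, lt a b → lt b c → lt a c
  total : ∀ a b, a ≠ b → lt a b ∨ lt b a
  add_right : ∀ a b c, lt a b → lt (a + c) (b + c)
  zero_lt : ∀ a, a ≠ 0 → lt 0 a

/-- The map `π : R = K[{T_u}_{u ∈ B}] → S`, `T_u ↦ u`. -/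
noncomputable def piB {n : ℕ} (K : Type*) [Field K] (B : Set (Mon n)) :
    MvPolynomial ↥B K →ₐ[K] MvPolynomial (Fin n) K :=
  MvPolynomial.aeval (fun u : ↥B => MvPolynomial.monomial (u : Mon n) (1 : K))

/-- The toric ideal `J = ker π` of `K[B]`. -/
noncomputable def toricJ {n : ℕ} (K : Type*) [Field K] (B : Set (Mon n)) :
    Ideal (MvPolynomial ↥B K) :=
  RingHom.ker (piB K B).toRingHom

/-- `m` is the leading monomial of `f ≠ 0` with respect to the order `lt` on exponent
vectors. -/
def IsLeadMon {α K : Type*} [CommSemiring K] (lt : (α →₀ ℕ) → (α →₀ ℕ) → Prop)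
    (f : MvPolynomial α K) (m : α →₀ ℕ) : Prop :=
  m ∈ f.support ∧ ∀ m' ∈ f.support, m' ≠ m → lt m' m

/-- `m` is a standard monomial of the ideal `J` with respect to the order `lt`: it is not
the leading monomial of any nonzero element of `J`. -/
def IsStdMon {α K : Type*} [CommSemiring K] (lt : (α →₀ ℕ) → (α →₀ ℕ) → Prop)
    (J : Ideal (MvPolynomial α K)) (m : α →₀ ℕ) : Prop :=
  ∀ f ∈ J, f ≠ 0 → ¬ IsLeadMon lt f m

/-- The image in `S` of a monomial `T_{u_1} ⋯ T_{u_N}` of `R`, i.e. the product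
`u_1 ⋯ u_N`. -/
noncomputable def expandB {n : ℕ} {B : Set (Mon n)} (e : ↥B →₀ ℕ) : Mon n :=
  e.sum fun u k => k • (u : Mon n)

/-- The number `N` of factors of a monomial `T_{u_1} ⋯ T_{u_N}` of `R`. -/
def edeg {n : ℕ} {B : Set (Mon n)} (e : ↥B →₀ ℕ) : ℕ := e.sum fun _ k => k

/-- `B` satisfies the σ-exchange property (with respect to the order `ltσ` on the monomials
of `S` and the order `ltR` on the monomials of `R = K[{T_u}_{u∈B}]`): whenever
`T_{u_1}⋯T_{u_N}` and `T_{v_1}⋯T_{v_N}` are standard monomials of `J` with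
`u_1⋯u_N <_σ v_1⋯v_N`, there are a factor `u_δ`, a `q ∈ supp(v_1⋯v_N)` and a
`j ∈ supp(u_δ)` with `ν_q(u_1⋯u_N) < ν_q(v_1⋯v_N)`, `x_j <_σ x_q` and
`x_q u_δ / x_j ∈ B`. -/
def SigmaExchange {n : ℕ} (K : Type*) [Field K] (B : Set (Mon n))
    (ltσ : Mon n → Mon n → Prop)
    (ltR : (↥B →₀ ℕ) → (↥B →₀ ℕ) → Prop) : Prop :=
  ∀ e e' : ↥B →₀ ℕ, edeg e = edeg e' →
    IsStdMon ltR (toricJ K B) e → IsStdMon ltR (toricJ K B) e' →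
    ltσ (expandB e) (expandB e') →
    ∃ uδ : ↥B, 0 < e uδ ∧ ∃ q j : Fin n,
      expandB e q < expandB e' q ∧
      0 < (uδ : Mon n) j ∧
      ltσ (Finsupp.single j 1) (Finsupp.single q 1) ∧
      ((uδ : Mon n) + Finsupp.single q 1 - Finsupp.single j 1) ∈ B

/-- The map `φ : 𝒯 = K[x_1,…,x_n,{T_u}_{u∈B}] → S[t]`, `x_i ↦ x_i`, `T_u ↦ u·t`; its image
is the Rees algebra of `I = (B)`. -/
noncomputable def reesPhi {n : ℕ} (K : Type*) [Field K] (B : Set (Mon n)) :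
    MvPolynomial (Fin n ⊕ ↥B) K →ₐ[K] Polynomial (MvPolynomial (Fin n) K) :=
  MvPolynomial.aeval (Sum.elim
    (fun i : Fin n => Polynomial.C (MvPolynomial.X i))
    (fun u : ↥B => Polynomial.C (MvPolynomial.monomial (u : Mon n) (1 : K)) * Polynomial.X))

/-- The toric ideal `P = ker φ` of the Rees algebra of `I = (B)`. -/
noncomputable def reesP {n : ℕ} (K : Type*) [Field K] (B : Set (Mon n)) :
    Ideal (MvPolynomial (Fin n ⊕ ↥B) K) :=
  RingHom.ker (reesPhi K B).toRingHom

/-- `f ∈ 𝒯` only involves the variables `T_u`, i.e. `f ∈ K[{T_u}_{u∈B}]`. -/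
def OnlyT {n : ℕ} {K : Type*} [Field K] {B : Set (Mon n)}
    (f : MvPolynomial (Fin n ⊕ ↥B) K) : Prop :=
  ∀ m ∈ f.support, ∀ i : Fin n, m (Sum.inl i) = 0

/-- `f ∈ 𝒯` is homogeneous of degree `1` in the variables `T_u`. -/
def TDegOne {n : ℕ} {K : Type*} [Field K] {B : Set (Mon n)}
    (f : MvPolynomial (Fin n ⊕ ↥B) K) : Prop :=
  ∀ m ∈ f.support, (∑ s ∈ m.support, if s.isRight then m s else 0) = 1

/-- The monomial ideal `I = (B)` is of fiber type: the toric ideal `P` of its Rees algebra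
is generated by `P ∩ K[{T_u}_{u∈B}]` together with the elements of `P` homogeneous of
degree `1` in the variables `T_u`. -/
def IsFiberType {n : ℕ} (K : Type*) [Field K] (B : Set (Mon n)) : Prop :=
  reesP K B =
    Ideal.span ({f | f ∈ reesP K B ∧ OnlyT f} ∪ {f | f ∈ reesP K B ∧ TDegOne f})

/-- The `S`-part of a monomial of `𝒯`. -/
noncomputable def sPart {n : ℕ} {B : Set (Mon n)} (m : (Fin n ⊕ ↥B) →₀ ℕ) : Mon n :=
  (Finsupp.sumFinsuppEquivProdFinsupp m).1

/-- The `T`-part of a monomial of `𝒯`. -/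
noncomputable def tPart {n : ℕ} {B : Set (Mon n)} (m : (Fin n ⊕ ↥B) →₀ ℕ) : ↥B →₀ ℕ :=
  (Finsupp.sumFinsuppEquivProdFinsupp m).2

/-- The product order `<_σ^#` on the monomials of `𝒯 = K[x_1,…,x_n,{T_u}_{u∈B}]`. -/
def ProdLT {n : ℕ} {B : Set (Mon n)} (ltσ : Mon n → Mon n → Prop)
    (ltR : (↥B →₀ ℕ) → (↥B →₀ ℕ) → Prop)
    (m m' : (Fin n ⊕ ↥B) →₀ ℕ) : Prop :=
  ltσ (sPart m) (sPart m') ∨ (sPart m = sPart m' ∧ ltR (tPart m) (tPart m'))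

/-- `G` is a Gröbner basis of the ideal `P` with respect to the order `lt`: the leading
monomial of every nonzero `f ∈ P` is divisible by the leading monomial of some element
of `G`. -/
def IsGB {α K : Type*} [CommSemiring K] (lt : (α →₀ ℕ) → (α →₀ ℕ) → Prop)
    (P : Ideal (MvPolynomial α K)) (G : Set (MvPolynomial α K)) : Prop :=
  ∀ f ∈ P, f ≠ 0 → ∃ g ∈ G, g ≠ 0 ∧
    ∃ mg mf, IsLeadMon lt g mg ∧ IsLeadMon lt f mf ∧ mg ≤ mf

/-! ### Lexicographic comparisons -/

theorem LexLT.trans' {n : ℕ} {a b c : Mon n} (h : LexLT a b) (h' : LexLT b c) : LexLT a c := by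
  obtain ⟨i, hi, hi'⟩ := h
  obtain ⟨k, hk, hk'⟩ := h'
  rcases lt_trichotomy i k with hik | rfl | hik
  · exact ⟨i, fun j hj => (hi j hj).trans (hk j (hj.trans hik)), by rw [← hk i hik]; exact hi'⟩
  · exact ⟨i, fun j hj => (hi j hj).trans (hk j hj), hi'.trans hk'⟩
  · exact ⟨k, fun j hj => (hi j (hj.trans hik)).trans (hk j hj), by rw [hi k hik]; exact hk'⟩

theorem LexLE.of_lt_of_le {n : ℕ} {a b c : Mon n} (h : LexLT a b) (h' : LexLE b c) :
    LexLE a c := by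
  rcases h' with rfl | h'
  · exact Or.inr h
  · exact Or.inr (h.trans' h')

theorem LexLE.of_not_lt {n : ℕ} {a b : Mon n} (h : ¬ LexLT b a) : LexLE a b := by
  classical
  by_cases hab : a = b
  · exact Or.inl hab
  right
  have hne : (Finset.univ.filter fun i => a i ≠ b i).Nonempty := by
    by_contra hc
    rw [Finset.not_nonempty_iff_eq_empty, Finset.filter_eq_empty_iff] at hc
    exact hab (Finsupp.ext fun i => by simpa using hc (Finset.mem_univ i))
  -- the first index at which `a` and `b` differ
  set i := Finset.min' _ hne with hi
  have hmem := Finset.min'_mem _ hne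
  have hlt : ∀ j, j < i → a j = b j := by
    intro j hj
    by_contra hc
    exact absurd (Finset.min'_le _ j (by simpa using hc)) (not_le.mpr hj)
  have hdiff : a i ≠ b i := by simpa using hmem
  rcases lt_or_gt_of_ne hdiff with h1 | h1
  · exact ⟨i, hlt, h1⟩
  · exact absurd ⟨i, fun j hj => (hlt j hj).symm, h1⟩ h

/-! ### The elements of the lexsegment -/

section LSeg

variable {n l d : ℕ} {u v : Mon n} {x₁ xl xn : Fin n}

/-- Monomials with `x_1`-exponent `1` lie above `v`, which is free of `x_1`. -/
theorem mem_LSeg_left (hl : 2 ≤ l) (hln : l ≤ n - 1)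
    (hx₁ : (x₁ : ℕ) = 0) (hxl : (xl : ℕ) = l - 1) (hxn : (xn : ℕ) = n - 1)
    (hv : v = Finsupp.single xl 1 + Finsupp.single xn (d - 1))
    {w : Mon n} (hw : mdeg w = d) (h0 : w x₁ = 1) (hwu : LexLE w u) :
    w ∈ LSeg u v d := by
  refine ⟨hw, hwu, Or.inr ⟨x₁, fun j hj => ?_, ?_⟩⟩
  · rw [Fin.lt_def] at hj
    omega
  · have h1 : x₁ ≠ xl := fun h => by rw [h] at hx₁; omega
    have h2 : x₁ ≠ xn := fun h => by rw [h] at hx₁; omega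
    rw [h0, hv]
    simp [Finsupp.single_eq_of_ne h1, Finsupp.single_eq_of_ne h2]

/-- Monomials free of `x_1` and divisible by one of `x_2, …, x_l`; here `x_1` divides `u`. -/
theorem mem_LSeg_right (hl : 2 ≤ l) (hln : l ≤ n - 1)
    (hx₁ : (x₁ : ℕ) = 0) (hxl : (xl : ℕ) = l - 1) (hxn : (xn : ℕ) = n - 1)
    (hu1 : u x₁ = 1)
    (hv : v = Finsupp.single xl 1 + Finsupp.single xn (d - 1))
    (hd : 2 ≤ d)
    {w : Mon n} (hw : mdeg w = d) (h0 : w x₁ = 0)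
    (hmid : ∃ i : Fin n, (i : ℕ) < l ∧ 0 < w i) :
    w ∈ LSeg u v d := by
  obtain ⟨i, hil, hi⟩ := hmid
  refine ⟨hw, Or.inr ⟨x₁, fun j hj => ?_, by omega⟩, LexLE.of_not_lt ?_⟩
  · rw [Fin.lt_def] at hj
    omega
  rintro ⟨k, hk, hk'⟩
  have hvk : ∀ t : Fin n, v t = (if l - 1 = (t : ℕ) then 1 else 0) +
      (if n - 1 = (t : ℕ) then d - 1 else 0) := by
    intro t
    rw [hv]
    simp [Finsupp.single_apply, Fin.ext_iff, hxl, hxn, -Finsupp.single_tsub]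
  have hvd : mdeg v = d := by
    have : mdeg v = 1 + (d - 1) := by
      rw [hv]
      simp [mdeg, Finset.sum_add_distrib, Finsupp.single_apply, -Finsupp.single_tsub]
    omega
  by_cases hkn : (k : ℕ) = n - 1
  · -- all exponents but the last agree, so the degrees would differ
    have : mdeg w < mdeg v := by
      refine Finset.sum_lt_sum (fun j _ => ?_) ⟨k, Finset.mem_univ _, hk'⟩
      rcases eq_or_ne j k with rfl | hj
      · exact hk'.le
      · refine (hk j ?_).le
        have : (j : ℕ) ≠ k := fun h => hj (Fin.ext h)
        have := j.isLt
        rw [Fin.lt_def]; omega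
    omega
  · have h1 := hvk k
    rw [if_neg (show ¬ n - 1 = (k : ℕ) from fun h => hkn h.symm)] at h1
    have hkl : l - 1 = (k : ℕ) := by
      by_contra hc
      rw [if_neg hc] at h1
      omega
    rw [if_pos hkl] at h1
    rcases eq_or_ne i k with rfl | hik
    · omega
    · have hlt : i < k := by
        have : (i : ℕ) ≠ k := fun h => hik (Fin.ext h)
        rw [Fin.lt_def]; omega
      have h2 := hk i hlt
      have h3 := hvk i
      rw [Fin.lt_def] at hlt
      rw [if_neg (by omega), if_neg (by omega)] at h3
      omega

/-- The bound by `u` gives the alternative in the exponents of `x_1, …, x_l`; the bound by `v`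
forces a low variable when `x_1` is absent. -/
theorem mem_LSeg_cases (hl : 2 ≤ l) (hx₁ : (x₁ : ℕ) = 0) (hxl : (xl : ℕ) = l - 1)
    (hu1 : u x₁ = 1)
    (humid : ∀ i : Fin n, 1 ≤ (i : ℕ) → (i : ℕ) < l → u i = 0)
    (hv : v = Finsupp.single xl 1 + Finsupp.single xn (d - 1))
    {w : Mon n} (hw : w ∈ LSeg u v d) :
    (w x₁ = 1 ∧ ∀ i : Fin n, 1 ≤ (i : ℕ) → (i : ℕ) < l → w i = 0) ∨
    (w x₁ = 0 ∧ ∃ i : Fin n, (i : ℕ) < l ∧ 0 < w i) := by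
  obtain ⟨-, hwu, hvw⟩ := hw
  have hex : ∃ i : Fin n, (i : ℕ) < l ∧ 0 < w i := by
    have hvl : 0 < v xl := by
      rw [hv]; simp
    rcases hvw with rfl | ⟨k, hk, hk'⟩
    · exact ⟨xl, by omega, hvl⟩
    · by_cases hkl : (k : ℕ) < l
      · exact ⟨k, hkl, by omega⟩
      · refine ⟨xl, by omega, ?_⟩
        rw [← hk _ (by rw [Fin.lt_def]; omega)]
        exact hvl
  rcases hwu with rfl | ⟨k, hk, hk'⟩
  · exact Or.inl ⟨hu1, humid⟩
  · by_cases hk0 : (k : ℕ) = 0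
    · have : k = x₁ := Fin.ext (hk0.trans hx₁.symm)
      rw [this, hu1] at hk'
      exact Or.inr ⟨by omega, hex⟩
    · have h0 : w x₁ = 1 := by
        rw [hk _ (by rw [Fin.lt_def]; omega), hu1]
      refine Or.inl ⟨h0, fun i hi1 hil => ?_⟩
      have hkl : l ≤ (k : ℕ) := by
        by_contra hc
        have := humid k (by omega) (by omega)
        omega
      rw [hk i (by rw [Fin.lt_def]; omega), humid i hi1 hil]

end LSeg

/-! ### Partial degrees of products -/

/-- Partial degrees are additive on the product `u_1⋯u_N`. -/
theorem sum_expandB {n : ℕ} {B : Set (Mon n)} (e : ↥B →₀ ℕ) (T : Finset (Fin n)) :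
    ∑ i ∈ T, expandB e i = ∑ w ∈ e.support, e w * ∑ i ∈ T, (w : Mon n) i := by
  simp only [expandB, Finsupp.sum, Finsupp.finsetSum_apply, Finsupp.smul_apply, smul_eq_mul]
  rw [Finset.sum_comm]
  simp only [Finset.mul_sum]

theorem mdeg_expandB {n d : ℕ} {B : Set (Mon n)} (hB : ∀ w ∈ B, mdeg w = d) (e : ↥B →₀ ℕ) :
    mdeg (expandB e) = edeg e * d := by
  have h : ∀ w : ↥B, ∑ i, (w : Mon n) i = d := fun w => hB w w.2
  rw [mdeg, sum_expandB, edeg, Finsupp.sum, Finset.sum_mul]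
  simp only [h]

/-- If `U_s < V_s`, with equality past `s` and equal total degrees, then `U` exceeds `V` in the
degree in the variables before `x_s`. -/
theorem sum_lt_of_revlex {n : ℕ} {U V : Mon n} {s : Fin n} (hdeg : mdeg U = mdeg V)
    (ht : ∀ t, s < t → U t = V t) (hs : U s < V s) :
    ∑ i ∈ Finset.univ.filter (· < s), V i < ∑ i ∈ Finset.univ.filter (· < s), U i := by
  have h1 := Finset.sum_filter_add_sum_filter_not Finset.univ (· < s) (fun i => U i)
  have h2 := Finset.sum_filter_add_sum_filter_not Finset.univ (· < s) (fun i => V i)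
  have h3 : ∑ i ∈ Finset.univ.filter (fun i => ¬ i < s), U i <
      ∑ i ∈ Finset.univ.filter (fun i => ¬ i < s), V i := by
    refine Finset.sum_lt_sum (fun i hi => ?_) ⟨s, by simp, hs⟩
    have hi' : s ≤ i := by simpa using hi
    rcases hi'.eq_or_lt with rfl | h
    · exact hs.le
    · exact (ht i h).le
  simp only [mdeg] at hdeg
  omega

/-! ### Replacing one variable -/

section Swap

variable {n : ℕ} {w : Mon n} {q j : Fin n}

theorem swap_apply (hj : 0 < w j) (hjq : j < q) (i : Fin n) :
    (w + Finsupp.single q 1 - Finsupp.single j 1 : Mon n) i =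
      if i = j then w j - 1 else if i = q then w q + 1 else w i := by
  have hne := hjq.ne
  simp only [Finsupp.coe_tsub, Pi.sub_apply, Finsupp.coe_add, Pi.add_apply,
    Finsupp.single_apply]
  split_ifs <;> grind

theorem mdeg_swap (hj : 0 < w j) :
    mdeg (w + Finsupp.single q 1 - Finsupp.single j 1) = mdeg w := by
  have hle : Finsupp.single j 1 ≤ w + Finsupp.single q 1 := by
    rw [Finsupp.single_le_iff]
    simp only [Finsupp.coe_add, Pi.add_apply]
    omega
  have h := congrArg mdeg (tsub_add_cancel_of_le hle)
  have hadd : ∀ a b : Mon n, mdeg (a + b) = mdeg a + mdeg b := fun a b => by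
    simp [mdeg, Finset.sum_add_distrib]
  have hsing : ∀ t : Fin n, mdeg (Finsupp.single t 1) = 1 := fun t => by
    simp [mdeg, Finsupp.single_apply]
  rw [hadd, hadd, hsing, hsing] at h
  omega

theorem lexLT_swap (hj : 0 < w j) (hjq : j < q) :
    LexLT (w + Finsupp.single q 1 - Finsupp.single j 1) w := by
  refine ⟨j, fun i hi => ?_, ?_⟩
  · rw [swap_apply hj hjq, if_neg hi.ne, if_neg (hi.trans hjq).ne]
  · rw [swap_apply hj hjq, if_pos rfl]
    omega

theorem decRevLexLT_single (hjq : j < q) :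
    DecRevLexLT (Finsupp.single j 1) (Finsupp.single q 1) := by
  refine Or.inr ⟨by simp [mdeg, Finsupp.single_apply], q, fun t ht => ?_, ?_⟩
  · rw [Finsupp.single_eq_of_ne (hjq.trans ht).ne', Finsupp.single_eq_of_ne ht.ne']
  · simp [Finsupp.single_eq_of_ne hjq.ne']

end Swap

/-! ### The exchange property -/

/-- for `2 ≤ l ≤ n-1`, `u = x_1 x_{l+1}^{a_{l+1}}⋯x_n^{a_n}` and
`v = x_l x_n^{d-1}` of degree `d` with `u ≥_lex v` (so that `I = (L(u,v))` is a lexsegment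
ideal with linear resolution which is not a completely lexsegment ideal), the set `L(u,v)`
satisfies the σ-exchange property, where `<_σ` is the decreasing revlexicographic order on
`S`, with respect to every monomial order on `R = K[{T_w}_{w ∈ L(u,v)}]`. -/
theorem stmt12 {n : ℕ} (K : Type*) [Field K] (l d : ℕ)
    (hl : 2 ≤ l) (hln : l ≤ n - 1) (hd : 2 ≤ d)
    (u v : Mon n) (hud : mdeg u = d)
    (hu1 : u ⟨0, by omega⟩ = 1)
    (humid : ∀ i : Fin n, 1 ≤ (i : ℕ) → (i : ℕ) < l → u i = 0)
    (hv : v = Finsupp.single (⟨l - 1, by omega⟩ : Fin n) 1 +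
      Finsupp.single (⟨n - 1, by omega⟩ : Fin n) (d - 1))
    (huv : LexLE v u) :
    ∀ o : MonOrd ↥(LSeg u v d),
      SigmaExchange K (LSeg u v d) DecRevLexLT o.lt := by
  intro o e e' hdeg _ _ hlt
  have hB : ∀ w ∈ LSeg u v d, mdeg w = d := fun w hw => hw.1
  have hcases := fun w (hw : w ∈ LSeg u v d) => mem_LSeg_cases hl rfl rfl hu1 humid hv hw
  have hmdeg : mdeg (expandB e) = mdeg (expandB e') := by
    rw [mdeg_expandB hB, mdeg_expandB hB, hdeg]
  rcases hlt with hlt | ⟨-, s, ht, hs⟩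
  · omega
  have hsum := sum_lt_of_revlex hmdeg ht hs
  -- it suffices to exchange some variable before `x_s` of some factor for `x_s`
  suffices h : ∃ w : ↥(LSeg u v d), 0 < e w ∧ ∃ j : Fin n, j < s ∧ 0 < (w : Mon n) j ∧
      ((w : Mon n) + Finsupp.single s 1 - Finsupp.single j 1) ∈ LSeg u v d by
    obtain ⟨w, hw, j, hjs, hj, hmem⟩ := h
    exact ⟨w, hw, s, j, hs, hj, decRevLexLT_single hjs, hmem⟩
  rw [sum_expandB e] at hsum
  by_cases hsl : (s : ℕ) < l
  · -- `x_s` is a low variable: any variable before it may be exchanged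
    obtain ⟨w, hw, hpos⟩ := Finset.exists_ne_zero_of_sum_ne_zero (Nat.ne_zero_of_lt hsum)
    obtain ⟨j, hj, hj0⟩ := Finset.exists_ne_zero_of_sum_ne_zero (right_ne_zero_of_mul hpos)
    have hjs : j < s := by simpa using hj
    have hjp : 0 < (w : Mon n) j := Nat.pos_of_ne_zero hj0
    refine ⟨w, Nat.pos_of_ne_zero (left_ne_zero_of_mul hpos), j, hjs, hjp, ?_⟩
    refine mem_LSeg_right hl hln rfl rfl rfl hu1 hv hd (by rw [mdeg_swap hjp]; exact hB w w.2) ?_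
      ⟨s, hsl, ?_⟩
    · rw [swap_apply hjp hjs]
      have hs0 : (⟨0, by omega⟩ : Fin n) ≠ s := by
        intro h
        rw [← h] at hjs
        simp [Fin.lt_def] at hjs
      rw [if_neg hs0]
      rcases hcases w w.2 with ⟨h0, hm⟩ | ⟨h0, -⟩
      · -- here `w = x_1 w'` with `w'` free of low variables, so `j` is the first index
        have hj0' : (⟨0, by omega⟩ : Fin n) = j := by
          by_contra hc
          have h1 : (j : ℕ) ≠ 0 := fun h => hc (Fin.ext h.symm)
          rw [Fin.lt_def] at hjs
          exact hj0 (hm j (by omega) (by omega))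
        rw [if_pos hj0', ← hj0', h0]
      · split_ifs with h
        · rw [← h, h0]
        · exact h0
    · rw [swap_apply hjp hjs, if_neg hjs.ne', if_pos rfl]
      omega
  · -- `x_s` is not low: some factor has degree at least `2` in the variables before `x_s`
    have hN : edeg e ≤ ∑ i ∈ Finset.univ.filter (· < s), expandB e' i := by
      rw [hdeg, sum_expandB, edeg, Finsupp.sum]
      refine Finset.sum_le_sum fun w _ => Nat.le_mul_of_pos_right _ ?_
      obtain ⟨i, hil, hi⟩ : ∃ i : Fin n, (i : ℕ) < l ∧ 0 < (w : Mon n) i := by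
        rcases hcases w w.2 with ⟨h0, -⟩ | ⟨-, h⟩
        · exact ⟨⟨0, by omega⟩, by simp; omega, by omega⟩
        · exact h
      refine Finset.sum_pos' (fun _ _ => Nat.zero_le _) ⟨i, ?_, hi⟩
      simp only [Finset.mem_filter, Finset.mem_univ, true_and, Fin.lt_def]
      omega
    have hlt2 := hN.trans_lt hsum
    rw [edeg, Finsupp.sum] at hlt2
    obtain ⟨w, hw, hw2⟩ := Finset.exists_lt_of_sum_lt hlt2
    have hew : 0 < e w := Nat.pos_of_ne_zero (Finsupp.mem_support_iff.mp hw)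
    have htwo : 1 < ∑ i ∈ Finset.univ.filter (· < s), (w : Mon n) i := by
      by_contra hc
      have := Nat.mul_le_mul_left (e w) (not_lt.mp hc)
      omega
    refine ⟨w, hew, ?_⟩
    have hsl0 : (⟨0, by omega⟩ : Fin n) ≠ s := by
      intro h
      rw [← h] at hsl
      simp only at hsl
      omega
    by_cases hhigh : ∃ j : Fin n, l ≤ (j : ℕ) ∧ j < s ∧ 0 < (w : Mon n) j
    · -- exchanging a variable that is not low keeps the low part
      obtain ⟨j, hlj, hjs, hjp⟩ := hhigh
      have hlow : ∀ i : Fin n, (i : ℕ) < l →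
          ((w : Mon n) + Finsupp.single s 1 - Finsupp.single j 1 : Mon n) i = (w : Mon n) i := by
        intro i hi
        rw [swap_apply hjp hjs, if_neg (by rintro rfl; omega), if_neg (by rintro rfl; omega)]
      have hdw : mdeg ((w : Mon n) + Finsupp.single s 1 - Finsupp.single j 1) = d := by
        rw [mdeg_swap hjp]; exact hB w w.2
      refine ⟨j, hjs, hjp, ?_⟩
      have hl0 := hlow ⟨0, by omega⟩ (by simp; omega)
      rcases hcases w w.2 with ⟨h0, -⟩ | ⟨h0, i, hil, hi⟩
      · exact mem_LSeg_left hl hln rfl rfl rfl hv hdw (by rw [hl0, h0])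
          (LexLE.of_lt_of_le (lexLT_swap hjp hjs) w.2.2.1)
      · exact mem_LSeg_right hl hln rfl rfl rfl hu1 hv hd hdw (by rw [hl0, h0])
          ⟨i, hil, by rw [hlow i hil]; exact hi⟩
    · -- all variables of `w` before `x_s` are low, and there are two of them with multiplicity
      have hlow : ∀ j : Fin n, j < s → 0 < (w : Mon n) j → (j : ℕ) < l := by
        intro j hjs hjp
        by_contra hc
        exact hhigh ⟨j, by omega, hjs, hjp⟩
      rcases hcases w w.2 with ⟨h0, hm⟩ | ⟨h0, i, hil, hi⟩
      · exfalso
        rw [Finset.sum_eq_single (⟨0, by omega⟩ : Fin n)] at htwo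
        · omega
        · intro j hj hj0
          by_contra hc
          have h1 : (j : ℕ) ≠ 0 := fun h => hj0 (Fin.ext h)
          exact hc (hm j (by omega) (hlow j (by simpa using hj) (Nat.pos_of_ne_zero hc)))
        · intro hc
          exfalso
          simp only [Finset.mem_filter, Finset.mem_univ, true_and, Fin.lt_def] at hc
          omega
      · have his : i < s := by rw [Fin.lt_def]; omega
        -- a low variable `x_j` such that `x_i` still divides `w / x_j`
        obtain ⟨j, hjs, hjp, hij⟩ : ∃ j, j < s ∧ 0 < (w : Mon n) j ∧
            (i = j → 1 < (w : Mon n) j) := by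
          by_cases h1 : 1 < (w : Mon n) i
          · exact ⟨i, his, hi, fun _ => h1⟩
          · have hmem : i ∈ Finset.univ.filter (· < s) := by simpa using his
            rw [← Finset.add_sum_erase _ _ hmem] at htwo
            obtain ⟨j, hj, hj0⟩ := Finset.exists_ne_zero_of_sum_ne_zero
              (show ∑ j ∈ (Finset.univ.filter (· < s)).erase i, (w : Mon n) j ≠ 0 by omega)
            rw [Finset.mem_erase] at hj
            exact ⟨j, by simpa using hj.2, Nat.pos_of_ne_zero hj0,
              fun h => absurd h.symm hj.1⟩
        refine ⟨j, hjs, hjp, mem_LSeg_right hl hln rfl rfl rfl hu1 hv hd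
          (by rw [mdeg_swap hjp]; exact hB w w.2) ?_ ⟨i, hil, ?_⟩⟩
        · rw [swap_apply hjp hjs, if_neg hsl0]
          split_ifs with h
          · rw [← h, h0]
          · exact h0
        · rw [swap_apply hjp hjs, if_neg his.ne]
          split_ifs with h
          · have := hij h
            omega
          · exact hi
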